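/- Let $p \ge 1$ be a real number, $\delta > 0$, $a \in \mathbb{R}$, and let $u : \mathbb{R} \to \mathbb{R}$ be continuously differentiable on $[a, a+\delta]$. Then $\int_a^{a+\delta} |u(x)|^p \, dx \le 2^{p-1} \delta\, |u(a)|^p + \frac{2^{p-1} \delta^p}{p} \int_a^{a+\delta} |u'(x)|^p \, dx$. -/

import Mathlib

/-!
On `[a, a + δ]` write `u x = u a + ∫ a..x, u'`. Convexity of `t ↦ t ^ p` gives
`|u x| ^ p ≤ 2 ^ (p - 1) * (|u a| ^ p + |∫ a..x, u'| ^ p)`, and the Hölder bound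
`abs_integral_rpow_le` controls the last term by `(x - a) ^ (p - 1) * ∫ a..(a + δ), |u'| ^ p`.
Integrating in `x`, with `∫ (x - a) ^ (p - 1) = δ ^ p / p`, gives the claim.
-/

/-- Hölder's inequality against the constant `1`, obtained from Jensen's inequality for
`t ↦ t ^ p` so that `p = 1` needs no separate treatment. -/
theorem abs_integral_rpow_le {p a x : ℝ} (hp : 1 ≤ p) (hax : a < x) {v : ℝ → ℝ}
    (hv : ContinuousOn v (Set.Icc a x)) :
    |∫ s in a..x, v s| ^ p ≤ (x - a) ^ (p - 1) * ∫ s in a..x, |v s| ^ p := by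
  have hp0 : 0 ≤ p := zero_le_one.trans hp
  have hd : 0 < x - a := sub_pos.mpr hax
  have hi1 : MeasureTheory.IntegrableOn (fun s => |v s|) (Set.Ioc a x) :=
    (hv.abs.integrableOn_Icc).mono_set Set.Ioc_subset_Icc_self
  have hi2 : MeasureTheory.IntegrableOn (fun s => |v s| ^ p) (Set.Ioc a x) :=
    ((hv.abs.rpow_const fun _ _ => Or.inr hp0).integrableOn_Icc).mono_set
      Set.Ioc_subset_Icc_self
  have hJ := (convexOn_rpow hp).map_set_average_le (μ := MeasureTheory.volume)
    (t := Set.Ioc a x) (f := fun s => |v s|)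
    (continuousOn_id.rpow_const fun _ _ => Or.inr hp0) isClosed_Ici
    (by simp [hax]) (by simp) (Filter.Eventually.of_forall fun s => abs_nonneg (v s))
    hi1 hi2
  rw [MeasureTheory.setAverage_eq, MeasureTheory.setAverage_eq,
    ← intervalIntegral.integral_of_le hax.le] at hJ
  rw [← intervalIntegral.integral_of_le hax.le] at hJ
  simp only [Real.volume_real_Ioc_of_le hax.le, smul_eq_mul] at hJ
  have hI : 0 ≤ ∫ s in a..x, |v s| :=
    intervalIntegral.integral_nonneg hax.le fun s _ => abs_nonneg _
  rw [Real.mul_rpow (inv_nonneg.mpr hd.le) hI, Real.inv_rpow hd.le] at hJ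
  have hdp : 0 < (x - a) ^ p := Real.rpow_pos_of_pos hd p
  calc |∫ s in a..x, v s| ^ p ≤ (∫ s in a..x, |v s|) ^ p :=
        Real.rpow_le_rpow (abs_nonneg _)
          (intervalIntegral.abs_integral_le_integral_abs hax.le) hp0
    _ = (x - a) ^ p * (((x - a) ^ p)⁻¹ * (∫ s in a..x, |v s|) ^ p) := by
        field_simp
    _ ≤ (x - a) ^ p * ((x - a)⁻¹ * ∫ s in a..x, |v s| ^ p) := by gcongr
    _ = (x - a) ^ (p - 1) * ∫ s in a..x, |v s| ^ p := by
        rw [Real.rpow_sub_one hd.ne']; ring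

theorem abs_add_rpow_le {p : ℝ} (hp : 1 ≤ p) (r t : ℝ) :
    |r + t| ^ p ≤ 2 ^ (p - 1) * (|r| ^ p + |t| ^ p) := by
  refine (Real.rpow_le_rpow (abs_nonneg _) (abs_add_le r t) (by linarith)).trans ?_
  exact_mod_cast NNReal.rpow_add_le_mul_rpow_add_rpow (Real.nnabs r) (Real.nnabs t) hp

/-- One-dimensional narrow-strip Poincaré-type inequality: for `p ≥ 1`,
`δ > 0` and `u` continuously differentiable on `[a, a+δ]`,
`∫_a^{a+δ} |u|^p ≤ 2^(p-1) δ |u(a)|^p + (2^(p-1) δ^p / p) ∫_a^{a+δ} |u'|^p`. -/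
theorem narrow_strip_poincare
    (p : ℝ) (hp : 1 ≤ p) (δ : ℝ) (hδ : 0 < δ) (a : ℝ) (u : ℝ → ℝ)
    (hu : ContDiffOn ℝ 1 u (Set.Icc a (a + δ))) :
    ∫ x in a..(a + δ), |u x| ^ p ≤
      2 ^ (p - 1) * δ * |u a| ^ p
        + 2 ^ (p - 1) * δ ^ p / p *
          ∫ x in a..(a + δ), |derivWithin u (Set.Icc a (a + δ)) x| ^ p := by
  have hp0 : 0 ≤ p := zero_le_one.trans hp
  have hab : a < a + δ := by linarith
  set v := derivWithin u (Set.Icc a (a + δ)) with hv_def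
  have hv : ContinuousOn v (Set.Icc a (a + δ)) :=
    hu.continuousOn_derivWithin (uniqueDiffOn_Icc hab) le_rfl
  have hvp : ContinuousOn (fun s => |v s| ^ p) (Set.Icc a (a + δ)) :=
    hv.abs.rpow_const fun _ _ => Or.inr hp0
  set K := ∫ x in a..(a + δ), |v x| ^ p with hK
  have hpt : ∀ x ∈ Set.Ioo a (a + δ),
      |u x| ^ p ≤ 2 ^ (p - 1) * (|u a| ^ p + (x - a) ^ (p - 1) * K) := by
    intro x hx
    have hsub : Set.Icc a x ⊆ Set.Icc a (a + δ) := Set.Icc_subset_Icc_right hx.2.le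
    have hftc : ∫ s in a..x, v s = u x - u a := by
      refine intervalIntegral.integral_eq_sub_of_hasDerivAt_of_le hx.1.le
        (hu.continuousOn.mono hsub) (fun s hs => ?_)
        ((hv.mono hsub).intervalIntegrable_of_Icc hx.1.le)
      have hs' : s ∈ Set.Icc a (a + δ) := hsub (Set.Ioo_subset_Icc_self hs)
      exact ((hu.differentiableOn one_ne_zero s hs').hasDerivWithinAt).hasDerivAt
        (Icc_mem_nhds hs.1 (hs.2.trans hx.2))
    have hux : u x = u a + ∫ s in a..x, v s := by rw [hftc]; ring
    have hmono : ∫ s in a..x, |v s| ^ p ≤ K :=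
      intervalIntegral.integral_mono_interval le_rfl hx.1.le hx.2.le
        (Filter.Eventually.of_forall fun s => Real.rpow_nonneg (abs_nonneg _) _)
        (hvp.intervalIntegrable_of_Icc hab.le)
    have hxa : 0 ≤ (x - a) ^ (p - 1) := Real.rpow_nonneg (by linarith [hx.1]) _
    have hH := (abs_integral_rpow_le hp hx.1 (hv.mono hsub)).trans
      (mul_le_mul_of_nonneg_left hmono hxa)
    rw [hux]
    refine (abs_add_rpow_le hp _ _).trans ?_
    gcongr
  have hcont : Continuous fun x : ℝ => (x - a) ^ (p - 1) :=
    (continuous_id.sub continuous_const).rpow_const fun _ => Or.inr (by linarith)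
  have hint : ∫ x in a..(a + δ), (x - a) ^ (p - 1) = δ ^ p / p := by
    rw [intervalIntegral.integral_comp_sub_right (fun x => x ^ (p - 1)) a,
      integral_rpow (Or.inl (by linarith))]
    simp [Real.zero_rpow (by linarith : p ≠ 0)]
  calc ∫ x in a..(a + δ), |u x| ^ p
      ≤ ∫ x in a..(a + δ), 2 ^ (p - 1) * (|u a| ^ p + (x - a) ^ (p - 1) * K) := by
        refine intervalIntegral.integral_mono_on_of_le_Ioo hab.le ?_ ?_ hpt
        · exact (hu.continuousOn.abs.rpow_const fun _ _ =>
            Or.inr hp0).intervalIntegrable_of_Icc hab.le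
        · exact Continuous.intervalIntegrable (by fun_prop) _ _
    _ = 2 ^ (p - 1) * δ * |u a| ^ p + 2 ^ (p - 1) * δ ^ p / p * K := by
        have hi : IntervalIntegrable (fun x => (x - a) ^ (p - 1) * K)
            MeasureTheory.volume a (a + δ) :=
          (hcont.mul continuous_const).intervalIntegrable _ _
        rw [intervalIntegral.integral_const_mul,
          intervalIntegral.integral_add intervalIntegrable_const hi,
          intervalIntegral.integral_mul_const, hint]
        simp only [intervalIntegral.integral_const, smul_eq_mul]
        ring
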